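/- arXiv:1804.10128 — 4 statements merged into one kernel-verified Lean document; each statement's English description precedes it below -/
import Mathlib

section
/- Let R = ℤ[f,g] and let T : y² + ((1+g)x + f)y = x³ + fx² be the Weierstrass curve over R with a₁ = 1+g, a₂ = f, a₃ = f, a₄ = a₆ = 0. For N ≥ 1 let b_N = ψ_N(0,0) ∈ ℤ[f,g] be the N-th division polynomial of T evaluated at (x, y) = (0, 0). Then b_N ≠ 0, and the multiplicity of the prime element f of ℤ[f,g] in b_N is exactly v_N, where v_N = 3k² if N = 3k, v_N = 3k² + 2k if N = 3k + 1, and v_N = 3k² + 4k + 1 if N = 3k + 2 (k ≥ 0): that is, f^{v_N} divides b_N and f^{v_N + 1} does not divide b_N. -/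
/-
At `(0, 0)` the division polynomials form the normalised elliptic divisibility sequence with
initial values `f`, `f³`, `g f⁵`. Its recurrences give `f ^ ⌊N² / 3⌋ ∣ b_N` by induction, and
`v_N = ⌊N² / 3⌋`.

For the converse, pull `T` back along the rational parametrisation `f = s (1 - s)³`,
`g = s (1 - 2s)` of a nodal component of its discriminant locus. There the sequence has the closed
form `b_N = (1 - s) ^ (N² - 1) s ^ (N choose 2) U_N`, with `U_N` the Lucas sequence of parameters
`(1, s)`. Nonzero roots of `U_N` are simple, so `1 - s` divides `b_N` at most `N²` times, whereas
`f ^ (v_N + 1) ∣ b_N` would make it divide `b_N` at least `3 v_N + 3 > N²` times.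
-/

open Polynomial WeierstrassCurve

/-- The universal Tate normal curve `T : y² + ((1+g)x + f)y = x³ + fx²` over `ℤ[f,g]`,
where `f = X 0` and `g = X 1` in `MvPolynomial (Fin 2) ℤ`. -/
noncomputable def tateCurve : WeierstrassCurve (MvPolynomial (Fin 2) ℤ) :=
  ⟨1 + MvPolynomial.X 1, MvPolynomial.X 0, MvPolynomial.X 0, 0, 0⟩

/-- `b_N = ψ_N(0,0)`, the `N`-th division polynomial of the universal Tate normal curve
evaluated at `(x, y) = (0, 0)`. -/
noncomputable def tateB (N : ℤ) : MvPolynomial (Fin 2) ℤ :=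
  (tateCurve.Ψ N).evalEval 0 0

/-- The exact multiplicity `v_N` of `f` in `b_N`:
`v_{3k} = 3k²`, `v_{3k+1} = 3k² + 2k`, `v_{3k+2} = 3k² + 4k + 1`. -/
def tateVal (N : ℕ) : ℕ :=
  if N % 3 = 0 then 3 * (N / 3) ^ 2
  else if N % 3 = 1 then 3 * (N / 3) ^ 2 + 2 * (N / 3)
  else 3 * (N / 3) ^ 2 + 4 * (N / 3) + 1

section NormEDS

variable {R : Type*} [CommRing R]

lemma normEDS_natCast_even (b c d : R) (m : ℕ) :
    normEDS b c d ↑(2 * (m + 3)) * b =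
      normEDS b c d ↑(m + 2) ^ 2 * normEDS b c d ↑(m + 3) * normEDS b c d ↑(m + 5) -
        normEDS b c d ↑(m + 1) * normEDS b c d ↑(m + 3) * normEDS b c d ↑(m + 4) ^ 2 := by
  have h := normEDS_even b c d (m + 3)
  push_cast
  ring_nf at h ⊢
  exact h

lemma normEDS_natCast_odd (b c d : R) (m : ℕ) :
    normEDS b c d ↑(2 * (m + 2) + 1) =
      normEDS b c d ↑(m + 4) * normEDS b c d ↑(m + 2) ^ 3 -
        normEDS b c d ↑(m + 1) * normEDS b c d ↑(m + 3) ^ 3 := by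
  have h := normEDS_odd b c d (m + 2)
  push_cast
  ring_nf at h ⊢
  exact h

theorem eq_normEDS {b c d : R} (hb : IsRegular b) {W : ℕ → R} (zero : W 0 = 0) (one : W 1 = 1)
    (two : W 2 = b) (three : W 3 = c) (four : W 4 = d * b)
    (even : ∀ m, W (2 * (m + 3)) * b =
      W (m + 2) ^ 2 * W (m + 3) * W (m + 5) - W (m + 1) * W (m + 3) * W (m + 4) ^ 2)
    (odd : ∀ m, W (2 * (m + 2) + 1) = W (m + 4) * W (m + 2) ^ 3 - W (m + 1) * W (m + 3) ^ 3)
    (n : ℕ) : W n = normEDS b c d n := by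
  induction n using normEDSRec with
  | zero => simpa using zero
  | one => simpa using one
  | two => simpa using two
  | three => simpa using three
  | four => simpa using four
  | even m h₁ h₂ h₃ h₄ h₅ =>
    apply hb.right
    simp only [even, normEDS_natCast_even, h₁, h₂, h₃, h₄, h₅]
  | odd m h₁ h₂ h₃ h₄ => rw [odd, normEDS_natCast_odd, h₁, h₂, h₃, h₄]

theorem normEDS_weighted_homogeneous {a b : R} (ha : IsRegular a) (hb : IsRegular b) (c d : R)
    (n : ℕ) :
    normEDS (a ^ 3 * b) (a ^ 8 * c) (a ^ 12 * d) n = a ^ (n ^ 2 - 1) * normEDS b c d n := by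
  have hexp (k : ℕ) : (k + 1) ^ 2 - 1 = k ^ 2 + 2 * k := by
    rw [add_sq]; omega
  symm
  apply eq_normEDS (W := fun n ↦ a ^ (n ^ 2 - 1) * normEDS b c d n) ((ha.pow 3).mul hb)
  case even =>
    intro m
    have h := normEDS_natCast_even b c d m
    simp only [show 2 * (m + 3) = 2 * m + 5 + 1 by ring, hexp] at h ⊢
    linear_combination a ^ (4 * m ^ 2 + 24 * m + 38) * h
  case odd =>
    intro m
    have h := normEDS_natCast_odd b c d m
    simp only [hexp] at h ⊢
    linear_combination a ^ (4 * m ^ 2 + 20 * m + 24) * h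
  case four =>
    simp only [Nat.reducePow, Nat.reduceSub, Nat.cast_ofNat, normEDS_four]
    ring
  all_goals simp

end NormEDS

lemma sq_div_three_even_le (m : ℕ) :
    (2 * (m + 3)) ^ 2 / 3 + 1 ≤
        2 * ((m + 2) ^ 2 / 3) + (m + 3) ^ 2 / 3 + (m + 5) ^ 2 / 3 ∧
      (2 * (m + 3)) ^ 2 / 3 + 1 ≤
        (m + 1) ^ 2 / 3 + (m + 3) ^ 2 / 3 + 2 * ((m + 4) ^ 2 / 3) := by
  obtain ⟨j, rfl | rfl | rfl⟩ : ∃ j, m = 3 * j ∨ m = 3 * j + 1 ∨ m = 3 * j + 2 :=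
    ⟨m / 3, by omega⟩
  all_goals ring_nf; omega

lemma sq_div_three_odd_le (m : ℕ) :
    (2 * (m + 2) + 1) ^ 2 / 3 ≤ (m + 4) ^ 2 / 3 + 3 * ((m + 2) ^ 2 / 3) ∧
      (2 * (m + 2) + 1) ^ 2 / 3 ≤ (m + 1) ^ 2 / 3 + 3 * ((m + 3) ^ 2 / 3) := by
  obtain ⟨j, rfl | rfl | rfl⟩ : ∃ j, m = 3 * j ∨ m = 3 * j + 1 ∨ m = 3 * j + 2 :=
    ⟨m / 3, by omega⟩
  all_goals ring_nf; omega

theorem pow_sq_div_three_dvd_normEDS {R : Type*} [CommRing R] {f c d : R} (hf : IsRegular f)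
    (hc : f ^ 3 ∣ c) (hd : f ^ 4 ∣ d) (n : ℕ) : f ^ (n ^ 2 / 3) ∣ normEDS f c d n := by
  induction n using normEDSRec with
  | zero => simp
  | one => simp
  | two => simp
  | three => simpa using hc
  | four => simpa [pow_succ f 4] using mul_dvd_mul_right hd f
  | even m h₁ h₂ h₃ h₄ h₅ =>
    obtain ⟨hle, hle'⟩ := sq_div_three_even_le m
    have hdvd : f ^ ((2 * (m + 3)) ^ 2 / 3 + 1) ∣ normEDS f c d ↑(2 * (m + 3)) * f := by
      rw [normEDS_natCast_even]
      apply dvd_sub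
      · refine (pow_dvd_pow f hle).trans ?_
        rw [pow_add, pow_add, mul_comm 2, pow_mul]
        exact mul_dvd_mul (mul_dvd_mul (pow_dvd_pow_of_dvd h₂ 2) h₃) h₅
      · refine (pow_dvd_pow f hle').trans ?_
        rw [pow_add, pow_add, mul_comm 2, pow_mul]
        exact mul_dvd_mul (mul_dvd_mul h₁ h₃) (pow_dvd_pow_of_dvd h₄ 2)
    rwa [pow_succ', mul_comm _ f, hf.left.dvd_cancel_left] at hdvd
  | odd m h₁ h₂ h₃ h₄ =>
    obtain ⟨hle, hle'⟩ := sq_div_three_odd_le m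
    rw [normEDS_natCast_odd]
    apply dvd_sub
    · refine (pow_dvd_pow f hle).trans ?_
      rw [pow_add, mul_comm 3, pow_mul]
      exact mul_dvd_mul h₄ (pow_dvd_pow_of_dvd h₂ 3)
    · refine (pow_dvd_pow f hle').trans ?_
      rw [pow_add, mul_comm 3, pow_mul]
      exact mul_dvd_mul h₁ (pow_dvd_pow_of_dvd h₃ 3)

/-- The Lucas sequence of the first kind with parameters `P` and `Q`: formally
`(αⁿ - βⁿ) / (α - β)` for the roots `α`, `β` of `x² - P x + Q`. -/
def lucasU {R : Type*} [CommRing R] (P Q : R) : ℕ → R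
  | 0 => 0
  | 1 => 1
  | n + 2 => P * lucasU P Q (n + 1) - Q * lucasU P Q n

section LucasU

variable {R : Type*} [CommRing R] (P Q : R)

@[simp]
lemma lucasU_zero : lucasU P Q 0 = 0 := rfl

@[simp]
lemma lucasU_one : lucasU P Q 1 = 1 := rfl

lemma lucasU_add_two (n : ℕ) :
    lucasU P Q (n + 2) = P * lucasU P Q (n + 1) - Q * lucasU P Q n := rfl

lemma lucasU_succ_sq_sub (n : ℕ) :
    lucasU P Q (n + 1) ^ 2 - P * lucasU P Q (n + 1) * lucasU P Q n + Q * lucasU P Q n ^ 2 =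
      Q ^ n := by
  induction n with
  | zero => simp
  | succ n ih =>
    rw [lucasU_add_two]
    linear_combination Q * ih

lemma lucasU_add_add_one (m n : ℕ) :
    lucasU P Q (m + n + 1) =
      lucasU P Q (m + 1) * lucasU P Q (n + 1) - Q * lucasU P Q m * lucasU P Q n := by
  induction n using Nat.twoStepInduction with
  | zero => simp
  | one => simp [lucasU_add_two, mul_comm]
  | more n ih₀ ih₁ =>
    rw [show m + (n + 2) + 1 = m + n + 1 + 2 by ring, lucasU_add_two,
      show m + n + 1 + 1 = m + (n + 1) + 1 by ring, ih₀, ih₁]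
    simp only [lucasU_add_two]
    ring

lemma lucasU_even_recurrence (m : ℕ) :
    lucasU P Q (m + 2) ^ 2 * lucasU P Q (m + 3) * lucasU P Q (m + 5) -
        lucasU P Q (m + 1) * lucasU P Q (m + 3) * lucasU P Q (m + 4) ^ 2 =
      Q ^ (m + 1) * P * lucasU P Q (2 * (m + 3)) := by
  rw [show 2 * (m + 3) = m + 2 + (m + 3) + 1 by ring, lucasU_add_add_one P Q (m + 2) (m + 3),
    ← lucasU_succ_sq_sub P Q (m + 1)]
  simp only [lucasU_add_two]
  ring

lemma lucasU_odd_recurrence (m : ℕ) :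
    lucasU P Q (m + 4) * lucasU P Q (m + 2) ^ 3 - lucasU P Q (m + 1) * lucasU P Q (m + 3) ^ 3 =
      Q ^ (m + 1) * lucasU P Q (2 * (m + 2) + 1) := by
  rw [two_mul, lucasU_add_add_one P Q (m + 2) (m + 2), ← lucasU_succ_sq_sub P Q (m + 1)]
  simp only [lucasU_add_two]
  ring

end LucasU

theorem normEDS_eq_pow_choose_mul_lucasU {R : Type*} [CommRing R] {P Q : R} (hP : IsRegular P)
    (hQ : IsRegular Q) (n : ℕ) :
    normEDS (P * Q) (Q ^ 3 * (P ^ 2 - Q)) (Q ^ 5 * (P ^ 2 - 2 * Q)) n =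
      Q ^ n.choose 2 * lucasU P Q n := by
  have choose_succ (k : ℕ) : (k + 1).choose 2 = k.choose 2 + k := by
    rw [Nat.choose_succ_succ', Nat.choose_one_right, add_comm]
  have choose_two_mul (k : ℕ) : (2 * k).choose 2 = 4 * k.choose 2 + k := by
    induction k with
    | zero => rfl
    | succ k ih =>
      rw [mul_add_one, choose_succ, choose_succ, choose_succ, ih]
      ring
  symm
  apply eq_normEDS (W := fun n ↦ Q ^ n.choose 2 * lucasU P Q n) (hP.mul hQ)
  case even =>
    intro m
    simp only [choose_two_mul, choose_succ]
    linear_combination -Q ^ (4 * m.choose 2 + 12 * m + 15) * lucasU_even_recurrence P Q m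
  case odd =>
    intro m
    simp only [choose_succ, choose_two_mul]
    linear_combination -Q ^ (4 * m.choose 2 + 10 * m + 9) * lucasU_odd_recurrence P Q m
  all_goals
    simp only [Nat.choose, Nat.reduceAdd, lucasU_add_two, zero_add, lucasU_one, lucasU_zero]
    ring

section SimpleRoots

variable {R : Type*} [CommRing R]

/- Differentiate `U_n = (αⁿ - βⁿ) / (α - β)`, where `dα/dX = -dβ/dX = -1 / (α - β)`. -/
lemma derivative_lucasU (p : R) (n : ℕ) :
    (C p ^ 2 - 4 * X) * derivative (lucasU (C p) X (n + 1)) =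
      ((n : R[X]) + 1) * C p * lucasU (C p) X n - 2 * (n : R[X]) * lucasU (C p) X (n + 1) := by
  induction n using Nat.twoStepInduction with
  | zero => simp
  | one =>
    simp only [lucasU_add_two, zero_add, lucasU_one, lucasU_zero, mul_zero, sub_zero, mul_one,
      derivative_C, Nat.cast_one]
    ring
  | more n ih₀ ih₁ =>
    rw [lucasU_add_two (C p) X (n + 1)]
    simp only [derivative_sub, derivative_mul, derivative_C, derivative_X]
    push_cast at ih₁ ⊢
    linear_combination C p * ih₁ - X * ih₀ - ((n : R[X]) + 1) * C p * lucasU_add_two (C p) X n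

theorem not_sq_X_sub_C_dvd_lucasU [IsDomain R] [CharZero R] {p c : R} (hp : p ≠ 0) (hc : c ≠ 0)
    (n : ℕ) : ¬ (X - C c) ^ 2 ∣ lucasU (C p) X (n + 1) := by
  intro hdvd
  have hroot : (lucasU (C p) X (n + 1)).eval c = 0 :=
    dvd_iff_isRoot.1 ((dvd_pow_self _ two_ne_zero).trans hdvd)
  have hroot' : (derivative (lucasU (C p) X (n + 1))).eval c = 0 := by
    have h := pow_sub_one_dvd_derivative_of_pow_dvd hdvd
    rw [Nat.add_one_sub_one, pow_one] at h
    exact dvd_iff_isRoot.1 h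
  have hprev : (lucasU (C p) X n).eval c = 0 := by
    have h := congrArg (eval c) (derivative_lucasU p n)
    simpa [hroot, hroot', hp, Nat.cast_add_one_ne_zero] using h
  have hpow := congrArg (eval c) (lucasU_succ_sq_sub (C p) X n)
  exact pow_ne_zero n hc (by simpa [hroot, hprev] using hpow.symm)

end SimpleRoots

theorem normEDS_nodal {R : Type*} [CommRing R] {s : R} (hs : IsRegular s)
    (hs' : IsRegular (1 - s)) (n : ℕ) :
    normEDS (s * (1 - s) ^ 3) ((s * (1 - s) ^ 3) ^ 3) (s * (1 - 2 * s) * (s * (1 - s) ^ 3) ^ 4) n =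
      (1 - s) ^ (n ^ 2 - 1) * (s ^ n.choose 2 * lucasU 1 s n) := by
  rw [← normEDS_eq_pow_choose_mul_lucasU isRegular_one hs,
    ← normEDS_weighted_homogeneous hs' (isRegular_one.mul hs)]
  congr 1 <;> ring

theorem not_pow_dvd_normEDS_nodal {R : Type*} [CommRing R] [IsDomain R] [CharZero R] {n v : ℕ}
    (hn : n ≠ 0) (hv : n ^ 2 < 3 * v) :
    ¬ (X * (1 - X) ^ 3 : R[X]) ^ v ∣ normEDS (X * (1 - X) ^ 3) ((X * (1 - X) ^ 3) ^ 3)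
      (X * (1 - 2 * X) * (X * (1 - X) ^ 3) ^ 4) n := by
  have hne : (1 - X : R[X]) ≠ 0 := sub_ne_zero.2 (by simpa using (X_ne_C (1 : R)).symm)
  have hcoprime : IsCoprime (1 - X : R[X]) X := ⟨1, 1, by ring⟩
  rw [normEDS_nodal (IsRegular.of_ne_zero X_ne_zero) (IsRegular.of_ne_zero hne)]
  intro hdvd
  have hpow : (1 - X : R[X]) ^ (n ^ 2 - 1) * (1 - X) ^ 2 ∣ (X * (1 - X) ^ 3) ^ v := by
    rw [← pow_add, mul_pow, ← pow_mul]
    exact (pow_dvd_pow _ (by have := pow_pos hn.bot_lt 2; omega)).mul_left _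
  have hsq : (1 - X : R[X]) ^ 2 ∣ X ^ n.choose 2 * lucasU 1 X n :=
    (mul_dvd_mul_iff_left (pow_ne_zero _ hne)).1 (hpow.trans hdvd)
  obtain ⟨m, rfl⟩ := Nat.exists_eq_succ_of_ne_zero hn
  apply not_sq_X_sub_C_dvd_lucasU (one_ne_zero' R) (one_ne_zero' R) m
  rw [C_1, sub_sq_comm]
  exact hcoprime.pow.dvd_of_dvd_mul_left hsq

theorem evalEval_Ψ_eq_normEDS {R : Type*} [CommRing R] (W : WeierstrassCurve R) {x y : R}
    (h : W.toAffine.Equation x y) (n : ℤ) :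
    (W.Ψ n).evalEval x y = normEDS (W.ψ₂.evalEval x y) (W.Ψ₃.eval x) (W.preΨ₄.eval x) n := by
  have hsq : W.Ψ₂Sq.eval x = W.ψ₂.evalEval x y ^ 2 := by
    have h' : W.toAffine.polynomial.evalEval x y = 0 := h
    rw [← evalEval_C x y, C_Ψ₂Sq]
    simp [h', evalEval_mul]
  have hpre : (W.preΨ n).eval x =
      preNormEDS (W.ψ₂.evalEval x y ^ 4) (W.Ψ₃.eval x) (W.preΨ₄.eval x) n := by
    rw [WeierstrassCurve.preΨ, ← coe_evalRingHom, map_preNormEDS, map_pow, coe_evalRingHom, hsq,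
      ← pow_mul]
  rw [WeierstrassCurve.Ψ, normEDS, evalEval_mul, evalEval_C, hpre, apply_ite (evalEval x y),
    evalEval_one]

lemma tateB_eq_normEDS (N : ℤ) :
    tateB N = normEDS (MvPolynomial.X 0) (MvPolynomial.X 0 ^ 3)
      (MvPolynomial.X 1 * MvPolynomial.X 0 ^ 4) N := by
  have hequation : tateCurve.toAffine.Equation 0 0 := by
    simp [Affine.equation_iff, tateCurve]
  have h₂ : tateCurve.ψ₂.evalEval 0 0 = MvPolynomial.X 0 := by
    simp [tateCurve, ψ₂, Affine.polynomialY, evalEval]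
  have h₃ : tateCurve.Ψ₃.eval 0 = MvPolynomial.X 0 ^ 3 := by
    trans tateCurve.b₈
    · simp [Ψ₃]
    · simp only [b₈, tateCurve]
      ring
  have h₄ : tateCurve.preΨ₄.eval 0 = MvPolynomial.X 1 * MvPolynomial.X 0 ^ 4 := by
    trans tateCurve.b₄ * tateCurve.b₈ - tateCurve.b₆ ^ 2
    · simp [preΨ₄]
    · simp only [b₄, b₆, b₈, tateCurve]
      ring
  rw [tateB, evalEval_Ψ_eq_normEDS _ hequation, h₂, h₃, h₄]

lemma tateVal_eq_sq_div_three (N : ℕ) : tateVal N = N ^ 2 / 3 := by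
  unfold tateVal
  split_ifs
  · obtain ⟨k, rfl⟩ : ∃ k, N = 3 * k := ⟨N / 3, by omega⟩
    rw [Nat.mul_div_cancel_left k three_pos]
    ring_nf
    omega
  · obtain ⟨k, rfl⟩ : ∃ k, N = 3 * k + 1 := ⟨N / 3, by omega⟩
    rw [show (3 * k + 1) / 3 = k by omega]
    ring_nf
    omega
  · obtain ⟨k, rfl⟩ : ∃ k, N = 3 * k + 2 := ⟨N / 3, by omega⟩
    rw [show (3 * k + 2) / 3 = k by omega]
    ring_nf
    omega

/-- The pullback `f ↦ s (1 - s)³`, `g ↦ s (1 - 2s)`, with `s = X`, to a family of nodal curves. -/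
noncomputable def nodalSpecialization : MvPolynomial (Fin 2) ℤ →+* ℤ[X] :=
  MvPolynomial.eval₂Hom C ![X * (1 - X) ^ 3, X * (1 - 2 * X)]

lemma nodalSpecialization_tateB (N : ℤ) :
    nodalSpecialization (tateB N) = normEDS (X * (1 - X) ^ 3) ((X * (1 - X) ^ 3) ^ 3)
      (X * (1 - 2 * X) * (X * (1 - X) ^ 3) ^ 4) N := by
  rw [tateB_eq_normEDS, map_normEDS]
  simp [nodalSpecialization]

/-- For `N ≥ 1`, the polynomial `b_N = ψ_N(0,0) ∈ ℤ[f,g]` is nonzero, and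
the multiplicity of the prime element `f` in `b_N` is exactly `v_N`: `f^{v_N}` divides `b_N`
and `f^{v_N + 1}` does not. -/
theorem tateB_multiplicity (N : ℕ) (hN : 1 ≤ N) :
    tateB N ≠ 0 ∧
      (MvPolynomial.X 0 : MvPolynomial (Fin 2) ℤ) ^ tateVal N ∣ tateB N ∧
      ¬ (MvPolynomial.X 0 : MvPolynomial (Fin 2) ℤ) ^ (tateVal N + 1) ∣ tateB N := by
  have hdvd : (MvPolynomial.X 0 : MvPolynomial (Fin 2) ℤ) ^ tateVal N ∣ tateB N := by
    rw [tateVal_eq_sq_div_three, tateB_eq_normEDS]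
    exact pow_sq_div_three_dvd_normEDS (IsRegular.of_ne_zero (MvPolynomial.X_ne_zero 0))
      dvd_rfl (dvd_mul_left _ _) N
  have hndvd : ¬ (MvPolynomial.X 0 : MvPolynomial (Fin 2) ℤ) ^ (tateVal N + 1) ∣ tateB N := by
    intro h
    have himage := map_dvd nodalSpecialization h
    rw [map_pow, nodalSpecialization_tateB] at himage
    have hlt : N ^ 2 < 3 * (tateVal N + 1) := by rw [tateVal_eq_sq_div_three]; omega
    apply not_pow_dvd_normEDS_nodal (R := ℤ) (Nat.one_le_iff_ne_zero.1 hN) hlt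
    simpa [nodalSpecialization] using himage
  exact ⟨fun h ↦ hndvd (h ▸ dvd_zero _), hdvd, hndvd⟩
end

section
/- Let R = ℤ[f,g] and let T : y² + ((1+g)x + f)y = x³ + fx² be the Weierstrass curve over R with a₁ = 1+g, a₂ = f, a₃ = f, a₄ = a₆ = 0. For N ≥ 1 let b_N = ψ_N(0,0) ∈ ℤ[f,g] be the N-th division polynomial of T evaluated at (x, y) = (0, 0). If M and N are positive integers with M ∣ N, then b_M divides b_N in ℤ[f,g]. -/
open Polynomial WeierstrassCurve

/-!
At a point of a Weierstrass curve `Ψₙ` takes the same value as `ψₙ`, a term of a normalised elliptic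
divisibility sequence `W`, so it suffices that `W k ∣ W (n * k)` for every such sequence. Given the
elliptic relations, `W ((2 * m + 1) * k) * W k` is a combination of `W (m * k) ^ 2` and
`W ((m + 1) * k) ^ 2`, and an induction on `n` produces the quotient `W (n * k) / W k`. The division
takes place over `ℤ[b,c,d]`, where `W k ≠ 0` for `k ≠ 0` because `W` specialises to the identity
sequence of `ℤ`; the resulting identity then holds over every commutative ring.

The elliptic relations follow from Ward's recurrences: they are three-term Plücker relations between
the atoms `W ((a + b) / 2) * W ((a - b) / 2)`, so the relations against a fixed pair `e`, `z` whose
atom is regular imply all others. With `e`, `z` as small as their parity allows, replacing the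
indices `a, b, e, z` by `s - z, s - e, s - b, s - a`, where `s` is half their sum, lowers the
largest one, unless the relation is one of the recurrences.
-/

section EllipticNet

open IsEllipticNet nonZeroDivisors

variable {R : Type*} [CommRing R] {W : ℤ → R}

lemma atomRel_swap₁₂ (odd : W.Odd) (a b c d : ℤ) : atomRel W b a c d = -atomRel W a b c d := by
  unfold atomRel
  linear_combination -atom W c d * neg_atom odd a b

lemma atom_sq_mul_atomRel (a b c d e z : ℤ) :
    atom W e z ^ 2 * atomRel W a b c d =
      atom W e z * (atom W c d * atomRel W a b e z - atom W b d * atomRel W a c e z +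
        atom W b c * atomRel W a d e z) +
      (atom W a e * atom W b z - atom W a z * atom W b e) * atomRel W c d e z -
      (atom W a e * atom W c z - atom W a z * atom W c e) * atomRel W b d e z +
      (atom W a e * atom W d z - atom W a z * atom W d e) * atomRel W b c e z := by
  unfold atomRel
  ring

lemma atomRel_eq_zero_of_forall_mem {e z : ℤ} (hez : atom W e z ∈ R⁰) {s : Set ℤ}
    (hs : ∀ x ∈ s, ∀ y ∈ s, atomRel W x y e z = 0) {a b c d : ℤ}
    (ha : a ∈ s) (hb : b ∈ s) (hc : c ∈ s) (hd : d ∈ s) : atomRel W a b c d = 0 := by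
  refine (mul_left_mem_nonZeroDivisors_eq_zero_iff (pow_mem hez 2)).mp ?_
  rw [atom_sq_mul_atomRel, hs a ha b hb, hs a ha c hc, hs a ha d hd, hs b hb c hc, hs b hb d hd,
    hs c hc d hd]
  ring

/-- The elliptic relations `ERₐ(a, b, c, d) = 0` hold for all indices of equal parity and absolute
value at most `n`. This is the induction hypothesis in the proof that Ward's recurrences imply all
elliptic relations. -/
def AtomRelUpTo (W : ℤ → R) (n : ℤ) : Prop :=
  ∀ ⦃a b c d : ℤ⦄, d % 2 = a % 2 ∧ d % 2 = b % 2 ∧ d % 2 = c % 2 →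
    |a| ≤ n → |b| ≤ n → |c| ≤ n → |d| ≤ n → atomRel W a b c d = 0

lemma atomRel_sub_two_eq_zero (odd_rel : ∀ m, rel W (m + 1) m 1 0 = 0)
    (even_rel : ∀ m, rel W (m + 1) (m - 1) 1 0 = 0) {a ε : ℤ} (ha : a % 2 = ε) :
    atomRel W a (a - 2) (ε + 2) ε = 0 := by
  obtain rfl | rfl : ε = 0 ∨ ε = 1 := by lia
  · have h := odd_rel (a / 2 - 1)
    rw [rel_eq] at h
    convert h using 2 <;> lia
  · have h := even_rel (a / 2)
    rw [rel_eq, ← atomRel_avg_sub W (by lia), ← atomRel_neg₄] at h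
    convert h using 2 <;> lia

lemma AtomRelUpTo.atomRel_eq_zero_of_lt {n : ℤ} (hn : AtomRelUpTo W n)
    (odd_rel : ∀ m, rel W (m + 1) m 1 0 = 0) (even_rel : ∀ m, rel W (m + 1) (m - 1) 1 0 = 0)
    {a b ε : ℤ} (haε : a % 2 = ε) (hbε : b % 2 = ε) (hb : 0 ≤ b) (hba : b < a) (ha : a ≤ n + 1) :
    atomRel W a b (ε + 2) ε = 0 := by
  obtain rfl | hb_ne := eq_or_ne b (a - 2)
  · exact atomRel_sub_two_eq_zero odd_rel even_rel haε
  · rw [← atomRel_avg_sub W (by lia)]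
    apply hn (by lia) <;> rw [abs_le] <;> constructor <;> lia

lemma AtomRelUpTo.atomRel_eq_zero_of_abs_le {n : ℤ} (hn : AtomRelUpTo W n) (odd : W.Odd)
    (zero : W 0 = 0) (odd_rel : ∀ m, rel W (m + 1) m 1 0 = 0)
    (even_rel : ∀ m, rel W (m + 1) (m - 1) 1 0 = 0)
    {a b ε : ℤ} (haε : a % 2 = ε) (hbε : b % 2 = ε) (ha : |a| ≤ n + 1) (hb : |b| ≤ n + 1) :
    atomRel W a b (ε + 2) ε = 0 := by
  have abs_emod_two (x : ℤ) : |x| % 2 = x % 2 := by rcases abs_choice x with h | h <;> lia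
  rw [← abs_emod_two] at haε hbε
  rw [← atomRel_abs₁ odd, ← atomRel_abs₂ odd]
  rcases lt_trichotomy |a| |b| with hab | hab | hba
  · rw [atomRel_swap₁₂ odd,
      hn.atomRel_eq_zero_of_lt odd_rel even_rel hbε haε (abs_nonneg a) hab hb, neg_zero]
  · rw [hab, atomRel_same₁₂, zero, mul_zero, zero_mul]
  · exact hn.atomRel_eq_zero_of_lt odd_rel even_rel haε hbε (abs_nonneg b) hba ha

lemma AtomRelUpTo.succ {n : ℤ} (hn : AtomRelUpTo W n) (odd : W.Odd) (zero : W 0 = 0)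
    (one : W 1 ∈ R⁰) (two : W 2 ∈ R⁰) (odd_rel : ∀ m, rel W (m + 1) m 1 0 = 0)
    (even_rel : ∀ m, rel W (m + 1) (m - 1) 1 0 = 0) : AtomRelUpTo W (n + 1) := by
  intro a b c d parity ha hb hc hd
  have base : atom W (d % 2 + 2) (d % 2) ∈ R⁰ := by
    rcases Int.emod_two_eq_zero_or_one d with h | h
    · simpa [h, atom] using mul_mem one one
    · simpa [h, atom] using mul_mem two one
  exact atomRel_eq_zero_of_forall_mem (s := {x | x % 2 = d % 2 ∧ |x| ≤ n + 1}) base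
    (fun x hx y hy ↦ hn.atomRel_eq_zero_of_abs_le odd zero odd_rel even_rel hx.1 hy.1 hx.2 hy.2)
    ⟨parity.1.symm, ha⟩ ⟨parity.2.1.symm, hb⟩ ⟨parity.2.2.symm, hc⟩ ⟨rfl, hd⟩

lemma atomRelUpTo_natCast (odd : W.Odd) (zero : W 0 = 0) (one : W 1 ∈ R⁰) (two : W 2 ∈ R⁰)
    (odd_rel : ∀ m, rel W (m + 1) m 1 0 = 0) (even_rel : ∀ m, rel W (m + 1) (m - 1) 1 0 = 0)
    (n : ℕ) : AtomRelUpTo W n := by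
  induction n with
  | zero =>
    intro a b c d _ ha hb _ _
    obtain rfl : a = 0 := by simpa using ha
    obtain rfl : b = 0 := by simpa using hb
    rw [atomRel_same₁₂, zero, mul_zero, zero_mul]
  | succ n ih => exact_mod_cast ih.succ odd zero one two odd_rel even_rel

theorem isEllipticNet_of_odd_rel_of_even_rel (odd : W.Odd) (zero : W 0 = 0) (one : W 1 ∈ R⁰)
    (two : W 2 ∈ R⁰) (odd_rel : ∀ m, rel W (m + 1) m 1 0 = 0)
    (even_rel : ∀ m, rel W (m + 1) (m - 1) 1 0 = 0) : IsEllipticNet W := by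
  intro p q r s
  rw [rel_eq]
  refine atomRelUpTo_natCast odd zero one two odd_rel even_rel
    ((2 * p + s).natAbs + (2 * q + s).natAbs + (2 * r + s).natAbs + s.natAbs)
    (by lia) ?_ ?_ ?_ ?_ <;> rw [Int.abs_eq_natAbs] <;> lia

end EllipticNet

section NormEDS

open IsEllipticNet nonZeroDivisors

variable {R : Type*} [CommRing R] (b c d : R)

lemma isEllipticNet_normEDS_of_mem_nonZeroDivisors (hb : b ∈ R⁰) :
    IsEllipticNet (normEDS b c d) := by
  refine isEllipticNet_of_odd_rel_of_even_rel (normEDS_neg b c d) (normEDS_zero b c d)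
    (by simp) (by simpa) (fun m ↦ ?_) (fun m ↦ ?_)
  · rw [rel_odd, normEDS_one]
    linear_combination normEDS_odd b c d m
  · rw [rel_even, normEDS_one, normEDS_two]
    linear_combination normEDS_even b c d m

theorem isEllipticNet_normEDS : IsEllipticNet (normEDS b c d) := by
  intro p q r s
  have universal := isEllipticNet_normEDS_of_mem_nonZeroDivisors
    (MvPolynomial.X 0 : MvPolynomial (Fin 3) ℤ) (MvPolynomial.X 1) (MvPolynomial.X 2)
    (mem_nonZeroDivisors_of_ne_zero (MvPolynomial.X_ne_zero 0)) p q r s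
  simpa [IsEllipticNet.map_rel, Function.comp_def] using
    congrArg (MvPolynomial.aeval (R := ℤ) ![b, c, d]) universal

lemma normEDS_two_three_two (n : ℤ) : normEDS (2 : ℤ) 3 2 n = n := by
  induction n using Int.negInduction with
  | neg ih n => rw [normEDS_neg, ih]
  | nat n =>
    induction n using normEDSRec with
    | zero | one | two | three | four => simp
    | even m h₁ h₂ h₃ h₄ h₅ =>
      have h := normEDS_even (2 : ℤ) 3 2 (m + 3)
      push_cast at h₁ h₂ h₃ h₄ h₅ ⊢
      ring_nf at h h₁ h₂ h₃ h₄ h₅ ⊢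
      rw [h₁, h₂, h₃, h₄, h₅] at h
      linarith
    | odd m h₁ h₂ h₃ h₄ =>
      have h := normEDS_odd (2 : ℤ) 3 2 (m + 2)
      push_cast at h₁ h₂ h₃ h₄ ⊢
      ring_nf at h h₁ h₂ h₃ h₄ ⊢
      rw [h, h₁, h₂, h₃, h₄]
      ring

lemma normEDS_X_ne_zero {k : ℤ} (hk : k ≠ 0) :
    normEDS (MvPolynomial.X 0 : MvPolynomial (Fin 3) ℤ) (MvPolynomial.X 1) (MvPolynomial.X 2) k ≠
      0 := by
  intro h
  have := congrArg (MvPolynomial.aeval ![(2 : ℤ), 3, 2]) h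
  simp [normEDS_two_three_two, hk] at this

lemma normEDS_two_mul_add_one_mul_mul_normEDS (k m : ℤ) :
    normEDS b c d ((2 * m + 1) * k) * normEDS b c d k =
      normEDS b c d (m * k) ^ 2 *
          (normEDS b c d ((m + 1) * k + 1) * normEDS b c d ((m + 1) * k - 1)) -
        normEDS b c d ((m + 1) * k) ^ 2 *
          (normEDS b c d (m * k + 1) * normEDS b c d (m * k - 1)) := by
  have h := isEllipticNet_normEDS b c d ((m + 1) * k) (m * k) 1 0
  rw [rel, show (m + 1) * k + m * k + 0 = (2 * m + 1) * k by ring,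
    show (m + 1) * k - m * k = k by ring] at h
  simp only [add_zero, normEDS_one, mul_one] at h
  linear_combination h

lemma normEDS_mul_complEDS_of_mem_nonZeroDivisors {k : ℤ} (hk : normEDS b c d k ∈ R⁰) (n : ℤ) :
    normEDS b c d k * complEDS b c d k n = normEDS b c d (n * k) := by
  induction n using Int.negInduction with
  | neg ih n => rw [complEDS_neg, neg_mul, normEDS_neg, mul_neg, ih]
  | nat n =>
    induction n using complEDSRec with
    | zero | one => simp
    | even m ih =>
      push_cast at ih ⊢
      rw [complEDS_even, ← mul_assoc, ih, normEDS_mul_complEDS₂, mul_assoc]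
    | odd m ih₁ ih₂ =>
      push_cast at ih₁ ih₂ ⊢
      rw [← mul_cancel_right_mem_nonZeroDivisors hk, normEDS_two_mul_add_one_mul_mul_normEDS,
        complEDS_odd, add_assoc (m : ℤ) 1 1, one_add_one_eq_two, ← ih₁, ← ih₂]
      ring

theorem normEDS_mul_complEDS (k n : ℤ) :
    normEDS b c d k * complEDS b c d k n = normEDS b c d (n * k) := by
  obtain rfl | hk := eq_or_ne k 0
  · simp
  · have universal := normEDS_mul_complEDS_of_mem_nonZeroDivisors _ _ _
      (mem_nonZeroDivisors_of_ne_zero (normEDS_X_ne_zero hk)) n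
    simpa using congrArg (MvPolynomial.aeval (R := ℤ) ![b, c, d]) universal

theorem isDvdSequence_normEDS : IsDvdSequence (normEDS b c d) := by
  rintro k _ ⟨n, rfl⟩
  exact ⟨complEDS b c d k n, by rw [normEDS_mul_complEDS, mul_comm]⟩

end NormEDS

section DivisionPolynomial

variable {R : Type*} [CommRing R] (W : WeierstrassCurve R) {x y : R}

lemma evalEval_Ψ_eq_evalEval_ψ (h : W.toAffine.Equation x y) (n : ℤ) :
    (W.Ψ n).evalEval x y = (W.ψ n).evalEval x y := by
  rw [← AdjoinRoot.evalEval_mk h, ← AdjoinRoot.evalEval_mk h]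
  exact congrArg (AdjoinRoot.evalEval h) (Affine.CoordinateRing.mk_ψ W n).symm

theorem tateB_dvd_tateB_general (h : W.toAffine.Equation x y) {m n : ℤ} (hmn : m ∣ n) :
    (W.Ψ m).evalEval x y ∣ (W.Ψ n).evalEval x y := by
  rw [evalEval_Ψ_eq_evalEval_ψ W h, evalEval_Ψ_eq_evalEval_ψ W h]
  exact evalEval_dvd x y (isDvdSequence_normEDS _ _ _ m n hmn)

end DivisionPolynomial

/-- If `M` and `N` are positive integers with `M ∣ N`, then `b_M` divides
`b_N` in `ℤ[f,g]`. -/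
theorem tateB_dvd_tateB (M N : ℕ) (hM : 1 ≤ M) (hN : 1 ≤ N) (hMN : M ∣ N) :
    tateB M ∣ tateB N :=
  tateB_dvd_tateB_general tateCurve (Affine.equation_zero.mpr rfl) (Int.natCast_dvd_natCast.mpr hMN)
end

section
/- Let k be a field of characteristic different from 2 and let E : y² = x³ + ax + b be an elliptic curve over k (4a³ + 27b² ≠ 0). The following are equivalent: (i) there is an admissible change of Weierstrass variables over k transforming E into a curve of the form y² = x³ + Ax² + Cx with C a nonzero square in k (equivalently, E admits a Montgomery model B·y² = x³ + A·x² + x over k); (ii) there exists α ∈ k with α³ + aα + b = 0 such that 3α² + a is a square in k. -/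
open WeierstrassCurve

/-- The short Weierstrass curve `y² = x³ + Ax + B`. -/
def shortCurve {k : Type*} [CommRing k] (A B : k) : WeierstrassCurve k :=
  ⟨0, 0, 0, A, B⟩

/-- The Weierstrass curve `y² = x³ + Ax² + Cx`, to which a Montgomery curve
`B·y² = x³ + A·x² + x` is `k`-isomorphic. -/
def montgomeryLike {k : Type*} [CommRing k] (A C : k) : WeierstrassCurve k :=
  ⟨0, A, 0, C, 0⟩

/-!
When `2` is not a zero divisor, the only changes of variables that introduce no term `xy` or `y`
into an equation `y² = f(x)`, with `f` a monic cubic, are those of the form `x = u²x' + r`,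
`y = u³y'`. Such a change Taylor-expands `f` at `r`, so the new constant term is `f(r) / u⁶` and the
new coefficient of `x'` is `f'(r) / u⁴`: the first vanishes exactly when `r` is a root of `f`, and
the second is a square exactly when `f'(r)` is. That the second is nonzero is forced by the
discriminant `16C²(A² - 4C)` of `y² = x³ + Ax² + Cx`.
-/

lemma isSquare_mul_iff_of_isUnit_left {M : Type*} [CommMonoid M] {a b : M} (ha : IsSquare a)
    (hu : IsUnit a) : IsSquare (a * b) ↔ IsSquare b := by
  refine ⟨fun hab ↦ ?_, ha.mul⟩
  obtain ⟨c, rfl⟩ := ha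
  obtain ⟨u, rfl⟩ := isUnit_of_mul_isUnit_left hu
  have h : IsSquare ((↑u⁻¹ * ↑u⁻¹ : M) * (u * u * b)) := (IsSquare.mul_self _).mul hab
  simpa [mul_mul_mul_comm, ← mul_assoc] using h

section CommRing

variable {R : Type*} [CommRing R]

instance shortCurve_isShortNF (a b : R) : (shortCurve a b).IsShortNF :=
  ⟨rfl, rfl, rfl⟩

lemma montgomeryLike_Δ (A C : R) :
    (montgomeryLike A C).Δ = 16 * C ^ 2 * (A ^ 2 - 4 * C) := by
  simp only [montgomeryLike, Δ, b₂, b₄, b₆, b₈]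
  ring

lemma ne_zero_of_variableChange_eq_montgomeryLike {W : WeierstrassCurve R} (hΔ : W.Δ ≠ 0)
    {V : VariableChange R} {A C : R} (h : V • W = montgomeryLike A C) : C ≠ 0 := by
  rintro rfl
  have hVΔ : V.u⁻¹ ^ 12 * W.Δ = 0 := by
    rw [← variableChange_Δ, h, montgomeryLike_Δ]
    ring
  exact hΔ ((V.u⁻¹.isUnit.pow 12).mul_right_eq_zero.mp hVΔ)

lemma variableChange_isCharNeTwoNF_iff (h2 : (2 : R) ∈ nonZeroDivisors R)
    (W : WeierstrassCurve R) [W.IsCharNeTwoNF] (V : VariableChange R) :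
    (V • W).IsCharNeTwoNF ↔ V.s = 0 ∧ V.t = 0 := by
  have hs : (V • W).a₁ = 0 ↔ V.s = 0 := by
    rw [variableChange_a₁, a₁_of_isCharNeTwoNF, zero_add, V.u⁻¹.isUnit.mul_right_eq_zero,
      mul_left_mem_nonZeroDivisors_eq_zero_iff h2]
  have ht : (V • W).a₃ = 0 ↔ V.t = 0 := by
    rw [variableChange_a₃, a₁_of_isCharNeTwoNF, a₃_of_isCharNeTwoNF, mul_zero, zero_add, zero_add,
      (V.u⁻¹.isUnit.pow 3).mul_right_eq_zero, mul_left_mem_nonZeroDivisors_eq_zero_iff h2]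
  rw [← hs, ← ht]
  exact ⟨fun h ↦ ⟨h.a₁, h.a₃⟩, fun h ↦ ⟨h.1, h.2⟩⟩

lemma eq_montgomeryLike_iff (W : WeierstrassCurve R) (A C : R) :
    W = montgomeryLike A C ↔ W.IsCharNeTwoNF ∧ W.a₂ = A ∧ W.a₄ = C ∧ W.a₆ = 0 := by
  constructor
  · rintro rfl
    exact ⟨⟨rfl, rfl⟩, rfl, rfl, rfl⟩
  · rintro ⟨hW, h₂, h₄, h₆⟩
    exact WeierstrassCurve.ext hW.a₁ h₂ hW.a₃ h₄ h₆

lemma variableChange_eq_montgomeryLike_iff (h2 : (2 : R) ∈ nonZeroDivisors R)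
    (W : WeierstrassCurve R) [W.IsCharNeTwoNF] (V : VariableChange R) (A C : R) :
    V • W = montgomeryLike A C ↔
      (V.s = 0 ∧ V.t = 0) ∧
        V.u⁻¹ ^ 2 * (W.a₂ + 3 * V.r) = A ∧
        V.u⁻¹ ^ 4 * (3 * V.r ^ 2 + 2 * W.a₂ * V.r + W.a₄) = C ∧
        V.r ^ 3 + W.a₂ * V.r ^ 2 + W.a₄ * V.r + W.a₆ = 0 := by
  rw [eq_montgomeryLike_iff, variableChange_isCharNeTwoNF_iff h2]
  refine and_congr_right fun ⟨hs, ht⟩ ↦ ?_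
  have h₂ : (V • W).a₂ = V.u⁻¹ ^ 2 * (W.a₂ + 3 * V.r) := by
    rw [variableChange_a₂, hs]
    ring
  have h₄ : (V • W).a₄ = V.u⁻¹ ^ 4 * (3 * V.r ^ 2 + 2 * W.a₂ * V.r + W.a₄) := by
    rw [variableChange_a₄, hs, ht]
    ring
  have h₆ : (V • W).a₆ = V.u⁻¹ ^ 6 * (V.r ^ 3 + W.a₂ * V.r ^ 2 + W.a₄ * V.r + W.a₆) := by
    rw [variableChange_a₆, ht, a₁_of_isCharNeTwoNF, a₃_of_isCharNeTwoNF]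
    ring
  rw [h₂, h₄, h₆, (V.u⁻¹.isUnit.pow 6).mul_right_eq_zero]

theorem montgomery_model_iff_general (h2 : (2 : R) ∈ nonZeroDivisors R) (W : WeierstrassCurve R)
    [W.IsCharNeTwoNF] (hΔ : W.Δ ≠ 0) :
    (∃ (V : VariableChange R) (A C : R), C ≠ 0 ∧ IsSquare C ∧ V • W = montgomeryLike A C) ↔
      ∃ α : R, α ^ 3 + W.a₂ * α ^ 2 + W.a₄ * α + W.a₆ = 0 ∧
        IsSquare (3 * α ^ 2 + 2 * W.a₂ * α + W.a₄) := by
  constructor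
  · rintro ⟨V, A, C, -, hC, h⟩
    obtain ⟨-, -, rfl, hr⟩ := (variableChange_eq_montgomeryLike_iff h2 W V A C).mp h
    have hu : IsSquare ((↑V.u⁻¹ : R) ^ 4) := Even.isSquare_pow (by decide) _
    exact ⟨V.r, hr, (isSquare_mul_iff_of_isUnit_left hu (V.u⁻¹.isUnit.pow 4)).mp hC⟩
  · rintro ⟨α, hα, hsq⟩
    have h : (⟨1, α, 0, 0⟩ : VariableChange R) • W =
        montgomeryLike (W.a₂ + 3 * α) (3 * α ^ 2 + 2 * W.a₂ * α + W.a₄) := by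
      simp [variableChange_eq_montgomeryLike_iff h2, hα]
    exact ⟨_, _, _, ne_zero_of_variableChange_eq_montgomeryLike hΔ h, hsq, h⟩

end CommRing

/-- Let `k` be a field of characteristic different from `2` and
`E : y² = x³ + ax + b` an elliptic curve over `k`.  The following are equivalent:
(i) some admissible change of Weierstrass variables over `k` transforms `E` into a curve
`y² = x³ + Ax² + Cx` with `C` a nonzero square in `k` (i.e. `E` admits a Montgomery model);
(ii) there exists `α ∈ k` with `α³ + aα + b = 0` such that `3α² + a` is a square in `k`. -/
theorem montgomery_model_iff
    {k : Type*} [Field k] (hchar : (2 : k) ≠ 0)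
    (a b : k) (hΔ : 4 * a ^ 3 + 27 * b ^ 2 ≠ 0) :
    (∃ (V : VariableChange k) (A C : k), C ≠ 0 ∧ IsSquare C ∧
        V • shortCurve a b = montgomeryLike A C) ↔
      ∃ α : k, α ^ 3 + a * α + b = 0 ∧ IsSquare (3 * α ^ 2 + a) := by
  have hE : (shortCurve a b).Δ ≠ 0 := by
    have h16 : (-16 : k) ≠ 0 := by
      rw [show (-16 : k) = -2 ^ 4 by norm_num]
      exact neg_ne_zero.mpr (pow_ne_zero 4 hchar)
    rw [Δ_of_isShortNF]
    exact mul_ne_zero h16 hΔ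
  simpa [shortCurve] using
    montgomery_model_iff_general (mem_nonZeroDivisors_of_ne_zero hchar) (shortCurve a b) hE
end

section
/- Let k be a finite field of odd cardinality q, let E : y² = x³ + ax + b be an elliptic curve over k (4a³ + 27b² ≠ 0), and let ε ∈ k be an element that is not a square. Let E^ε : y² = x³ + aε²x + bε³ be the quadratic twist of E by ε. Then the numbers of k-rational points (affine points together with the point at infinity) satisfy #E(k) + #E^ε(k) = 2q + 2. Equivalently, writing #E(k) = q + 1 − t, one has #E^ε(k) = q + 1 + t: twisting changes the sign of the trace of Frobenius. -/
open WeierstrassCurve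

/-!
Let `χ` be the quadratic character of `k`. Over each `x` the curve `y² = f(x)` has `1 + χ(f(x))`
points, so its trace of Frobenius is `-∑ₓ χ(f(x))`. The cubic of the twist by `ε` takes the value
`ε³ f(x)` at `εx`, so the twist multiplies the trace by `χ(ε)³ = χ(ε)`, which is `-1` for a
nonsquare `ε`.
-/

section CommRing

variable {R : Type*} [CommRing R]

instance isShortNF_shortCurve (A B : R) : (shortCurve A B).IsShortNF := ⟨rfl, rfl, rfl⟩

theorem isElliptic_shortCurve {A B : R} (h2 : IsUnit (2 : R))
    (hAB : IsUnit (4 * A ^ 3 + 27 * B ^ 2)) : (shortCurve A B).IsElliptic := by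
  have hΔ : (shortCurve A B).Δ = -(2 ^ 4 * (4 * A ^ 3 + 27 * B ^ 2)) := by
    rw [Δ_of_isShortNF, shortCurve]
    ring
  exact ⟨hΔ ▸ ((h2.pow 4).mul hAB).neg⟩

/-- The quadratic twist `y² = x³ + εa₂x² + ε²a₄x + ε³a₆` of `y² = x³ + a₂x² + a₄x + a₆` by `ε`.
The coefficients `a₁` and `a₃` are discarded, so this is only meaningful when they vanish. -/
def quadraticTwist (W : WeierstrassCurve R) (ε : R) : WeierstrassCurve R :=
  ⟨0, ε * W.a₂, 0, ε ^ 2 * W.a₄, ε ^ 3 * W.a₆⟩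

theorem quadraticTwist_shortCurve (A B ε : R) :
    quadraticTwist (shortCurve A B) ε = shortCurve (A * ε ^ 2) (B * ε ^ 3) := by
  simp only [quadraticTwist, shortCurve, mul_zero, mul_comm]

instance isCharNeTwoNF_quadraticTwist (W : WeierstrassCurve R) (ε : R) :
    (quadraticTwist W ε).IsCharNeTwoNF := ⟨rfl, rfl⟩

variable (W : WeierstrassCurve R) [W.IsCharNeTwoNF]

theorem Δ_quadraticTwist (ε : R) : (quadraticTwist W ε).Δ = ε ^ 6 * W.Δ := by
  rw [Δ_of_isCharNeTwoNF, Δ_of_isCharNeTwoNF, quadraticTwist]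
  ring

theorem isElliptic_quadraticTwist [W.IsElliptic] {ε : R} (hε : IsUnit ε) :
    (quadraticTwist W ε).IsElliptic :=
  ⟨Δ_quadraticTwist W ε ▸ (hε.pow 6).mul W.isUnit_Δ⟩

theorem equation_iff_of_isCharNeTwoNF (x y : R) :
    W.toAffine.Equation x y ↔ y ^ 2 = x ^ 3 + W.a₂ * x ^ 2 + W.a₄ * x + W.a₆ := by
  simp only [Affine.equation_iff, a₁_of_isCharNeTwoNF, a₃_of_isCharNeTwoNF, zero_mul, add_zero]

theorem isUnit_two_of_isCharNeTwoNF [W.IsElliptic] : IsUnit (2 : R) := by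
  have hdvd : 2 ∣ W.Δ := by
    rw [Δ_of_isCharNeTwoNF]
    exact ⟨-32 * W.a₂ ^ 3 * W.a₆ + 8 * W.a₂ ^ 2 * W.a₄ ^ 2 - 32 * W.a₄ ^ 3 - 216 * W.a₆ ^ 2
      + 144 * W.a₂ * W.a₄ * W.a₆, by ring⟩
  exact isUnit_of_dvd_unit hdvd W.isUnit_Δ

end CommRing

theorem card_point_eq_sum_card_fiber_add_one {R : Type*} [CommRing R] [Nontrivial R] [Fintype R]
    (W : WeierstrassCurve R) [W.IsElliptic] :
    Nat.card W.toAffine.Point = ∑ x : R, Nat.card {y : R // W.toAffine.Equation x y} + 1 := by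
  rw [Nat.card_congr (Affine.pointEquiv W.toAffine), WithZero, Finite.card_option,
    Nat.card_congr (Equiv.subtypeProdEquivSigmaSubtype W.toAffine.Equation), Nat.card_sigma]

section FiniteField

variable {k : Type*} [Field k] [Fintype k]

theorem card_sqrts_eq_quadraticChar_add_one [DecidableEq k] (hk : ringChar k ≠ 2) (c : k) :
    (Nat.card {y : k // y ^ 2 = c} : ℤ) = quadraticChar k c + 1 := by
  rw [← quadraticChar_card_sqrts hk, Set.toFinset_card, ← Nat.card_eq_fintype_card]
  rfl

/-- The trace of Frobenius `t = q + 1 - #E(k)` of an elliptic curve `E` over a finite field `k`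
with `q` elements. -/
noncomputable def frobeniusTrace (W : WeierstrassCurve k) : ℤ :=
  Fintype.card k + 1 - Nat.card W.toAffine.Point

variable (W : WeierstrassCurve k) [W.IsCharNeTwoNF] [W.IsElliptic]

theorem frobeniusTrace_eq_neg_sum_quadraticChar [DecidableEq k] :
    frobeniusTrace W =
      -∑ x : k, quadraticChar k (x ^ 3 + W.a₂ * x ^ 2 + W.a₄ * x + W.a₆) := by
  have hk : ringChar k ≠ 2 := fun h =>
    (isUnit_two_of_isCharNeTwoNF W).ne_zero (by exact_mod_cast h ▸ ringChar.Nat.cast_ringChar)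
  simp only [frobeniusTrace, card_point_eq_sum_card_fiber_add_one, equation_iff_of_isCharNeTwoNF,
    Nat.cast_add, Nat.cast_sum, card_sqrts_eq_quadraticChar_add_one hk, Finset.sum_add_distrib,
    Finset.sum_const, Finset.card_univ, nsmul_eq_mul]
  ring

theorem frobeniusTrace_quadraticTwist [DecidableEq k] {ε : k} (hε : ε ≠ 0) :
    frobeniusTrace (quadraticTwist W ε) = quadraticChar k ε * frobeniusTrace W := by
  have := isElliptic_quadraticTwist W hε.isUnit
  have hχ : quadraticChar k (ε ^ 3) = quadraticChar k ε := by
    rw [pow_succ, map_mul, quadraticChar_sq_one' hε, one_mul]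
  have hcubic (x : k) :
      (ε * x) ^ 3 + ε * W.a₂ * (ε * x) ^ 2 + ε ^ 2 * W.a₄ * (ε * x) + ε ^ 3 * W.a₆ =
        ε ^ 3 * (x ^ 3 + W.a₂ * x ^ 2 + W.a₄ * x + W.a₆) := by
    ring
  rw [frobeniusTrace_eq_neg_sum_quadraticChar, frobeniusTrace_eq_neg_sum_quadraticChar, mul_neg,
    Finset.mul_sum, ← Equiv.sum_comp (Equiv.mulLeft₀ ε hε)]
  simp only [quadraticTwist, Equiv.mulLeft₀_apply, hcubic, map_mul, hχ]

theorem card_add_card_twist_general {ε : k} (hε : ¬ IsSquare ε) :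
    Nat.card W.toAffine.Point + Nat.card (quadraticTwist W ε).toAffine.Point =
      2 * Fintype.card k + 2 := by
  classical
  have hε0 : ε ≠ 0 := fun h => hε (h ▸ IsSquare.zero)
  have htrace : frobeniusTrace (quadraticTwist W ε) = -frobeniusTrace W := by
    rw [frobeniusTrace_quadraticTwist W hε0, quadraticChar_neg_one_iff_not_isSquare.mpr hε,
      neg_one_mul]
  unfold frobeniusTrace at htrace
  omega

end FiniteField

/-- Let `k` be a finite field of odd cardinality `q`, let
`E : y² = x³ + ax + b` be an elliptic curve over `k`, and let `ε ∈ k` be a nonsquare.  Let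
`E^ε : y² = x³ + aε²x + bε³` be the quadratic twist of `E` by `ε`.  Then
`#E(k) + #E^ε(k) = 2q + 2`: twisting changes the sign of the trace of Frobenius. -/
theorem card_add_card_twist
    {k : Type*} [Field k] [Fintype k] (hodd : Odd (Fintype.card k))
    (a b : k) (hΔ : 4 * a ^ 3 + 27 * b ^ 2 ≠ 0)
    (ε : k) (hε : ¬ IsSquare ε) :
    Nat.card ((shortCurve a b).toAffine.Point) +
        Nat.card ((shortCurve (a * ε ^ 2) (b * ε ^ 3)).toAffine.Point) =
      2 * Fintype.card k + 2 := by
  have h2 : (2 : k) ≠ 0 := Ring.two_ne_zero fun h =>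
    hodd.not_two_dvd_nat (Nat.dvd_of_mod_eq_zero (FiniteField.even_card_of_char_two h))
  have := isElliptic_shortCurve h2.isUnit hΔ.isUnit
  rw [← quadraticTwist_shortCurve, card_add_card_twist_general _ hε]
end
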